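/- Let 0 ≤ h < k, let n = ⌊km/(h+1)⌋, assume k < n and km − (h+2)·⌊km/(h+1)⌋ < 0. Let U be an [n,k]_{q^m/q} system and let C be a nondegenerate [n,k]_{q^m/q} code associated to U. Then U is h-scattered (hence quasi-maximum h-scattered, since dim_{𝔽_q} U = ⌊km/(h+1)⌋) if and only if C^⊥ is quasi-MRD, i.e., Rdef(C^⊥) = m − ⌈(n−k)m/n⌉ − d(C^⊥) + 1 = 0. -/

import Mathlib

open Module Submodule

noncomputable section

variable (Fq Fqm : Type) [Field Fq] [Field Fqm] [Algebra Fq Fqm]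

/-- Rank weight of a vector in `Fqm^n`: the `Fq`-dimension of the span of its entries. -/
def rankWeight {n : ℕ} (v : Fin n → Fqm) : ℕ :=
  finrank Fq (span Fq (Set.range v))

/-- Minimum rank distance of a code. -/
def minRankDist {n : ℕ} (C : Submodule Fqm (Fin n → Fqm)) : ℕ :=
  sInf {w : ℕ | ∃ v ∈ C, v ≠ 0 ∧ rankWeight Fq Fqm v = w}

/-- Dual code with respect to the standard bilinear form. -/
def dualCode {n : ℕ} (C : Submodule Fqm (Fin n → Fqm)) : Submodule Fqm (Fin n → Fqm) where
  carrier := {v | ∀ c ∈ C, ∑ i, c i * v i = 0}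
  add_mem' := by
    intro a b ha hb c hc
    simp only [Set.mem_setOf_eq] at ha hb
    simp only [Pi.add_apply, mul_add, Finset.sum_add_distrib, ha c hc, hb c hc, add_zero]
  zero_mem' := by
    intro c hc
    simp
  smul_mem' := by
    intro t a ha c hc
    simp only [Set.mem_setOf_eq] at ha
    have key : (∑ i, c i * (t • a) i) = t * ∑ i, c i * a i := by
      rw [Finset.mul_sum]
      refine Finset.sum_congr rfl fun i _ => ?_
      simp only [Pi.smul_apply, smul_eq_mul]
      ring
    simp only [Set.mem_setOf_eq, key, ha c hc, mul_zero]

/-- An `Fqm`-subspace of `Fqm^n` is Galois closed if it is stable under the componentwise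
action of every element of `Gal(Fqm/Fq)`. -/
def GaloisClosed {n : ℕ} (A : Submodule Fqm (Fin n → Fqm)) : Prop :=
  ∀ θ : Fqm ≃ₐ[Fq] Fqm, ∀ v ∈ A, (fun i => θ (v i)) ∈ A

/-- The `s`-th generalized rank weight of a code `C`. -/
def grw {n : ℕ} (C : Submodule Fqm (Fin n → Fqm)) (s : ℕ) : ℕ :=
  sInf {x : ℕ | ∃ A : Submodule Fqm (Fin n → Fqm),
    GaloisClosed Fq Fqm A ∧ s ≤ finrank Fqm ↥(A ⊓ C) ∧ finrank Fqm ↥A = x}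

/-- `G` (given as the tuple of its rows) is a generator matrix for `C`. -/
def IsGenMatrix {n k : ℕ} (C : Submodule Fqm (Fin n → Fqm)) (G : Fin k → Fin n → Fqm) : Prop :=
  C = span Fqm (Set.range G)

/-- A code is nondegenerate if the `Fq`-span of the columns of a generator matrix has
`Fq`-dimension `n`. -/
def IsNondegenerate {n : ℕ} (k : ℕ) (C : Submodule Fqm (Fin n → Fqm)) : Prop :=
  ∃ G : Fin k → Fin n → Fqm, IsGenMatrix Fqm C G ∧
    finrank Fq ↥(span Fq (Set.range fun j : Fin n => fun i : Fin k => G i j)) = n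

/-- `U` is a system associated to the code `C`: `U` is the `Fq`-span of the columns of some
generator matrix of `C`. -/
def IsAssociatedSystem {n k : ℕ} (C : Submodule Fqm (Fin n → Fqm))
    (U : Submodule Fq (Fin k → Fqm)) : Prop :=
  ∃ G : Fin k → Fin n → Fqm, IsGenMatrix Fqm C G ∧
    U = span Fq (Set.range fun j : Fin n => fun i : Fin k => G i j)

/-- `U` is an `[n,k]` system: an `n`-dimensional `Fq`-subspace of `Fqm^k` whose
`Fqm`-span is everything. -/
def IsSystem {k : ℕ} (n : ℕ) (U : Submodule Fq (Fin k → Fqm)) : Prop :=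
  finrank Fq ↥U = n ∧ span Fqm (U : Set (Fin k → Fqm)) = ⊤

/-- `U` is `(h,r)`-evasive: every `h`-dimensional `Fqm`-subspace meets `U` in `Fq`-dimension
at most `r`. -/
def IsEvasive {k : ℕ} (U : Submodule Fq (Fin k → Fqm)) (h r : ℕ) : Prop :=
  ∀ W : Submodule Fqm (Fin k → Fqm), finrank Fqm ↥W = h →
    finrank Fq ↥(U ⊓ W.restrictScalars Fq) ≤ r

/-- A `k`-dimensional code `C ⊆ Fqm^n` is near MRD if `d₁(C) = n-k` and `dₛ(C) = n-k+s`
for all `2 ≤ s ≤ k`. -/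
def IsNearMRD {n : ℕ} (k : ℕ) (C : Submodule Fqm (Fin n → Fqm)) : Prop :=
  grw Fq Fqm C 1 = n - k ∧ ∀ s : ℕ, 2 ≤ s → s ≤ k → grw Fq Fqm C s = n - k + s

/-!
Write `L = Fqm`, `K = Fq`, and let `g₁, …, gₙ ∈ L^k` be the columns of a generator matrix of `C`, so
that `C^⊥` is the space of `L`-linear relations `∑ vⱼ gⱼ = 0`. A vector `v ∈ L^n` has rank weight at
most `r` exactly when it is an `L`-combination `∑ aᵢ Bᵢ` of `r` vectors `Bᵢ ∈ K^n`, and then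
`∑ vⱼ gⱼ = ∑ aᵢ uᵢ` with `uᵢ = ∑ Bᵢⱼ gⱼ ∈ U`. Hence `C^⊥` has no nonzero word of weight at most
`h + 1` if and only if any `h + 1` vectors of `U` independent over `K` are independent over `L`,
which is `h`-scatteredness. The Singleton bound gives `d(C^⊥) ≤ ⌊km/n⌋ + 1 = h + 2`, and the defect
of `C^⊥` is `⌊km/n⌋ + 1 - d(C^⊥)`.
-/

theorem exists_ge_finrank_eq {K V : Type*} [DivisionRing K] [AddCommGroup V] [Module K V]
    [FiniteDimensional K V] {S : Submodule K V} {r : ℕ} (hSr : finrank K S ≤ r)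
    (hr : r ≤ finrank K V) : ∃ T : Submodule K V, S ≤ T ∧ finrank K T = r := by
  induction r, hSr using Nat.le_induction with
  | base => exact ⟨S, le_rfl, rfl⟩
  | succ r _ ih =>
    obtain ⟨T, hST, hT⟩ := ih (by omega)
    obtain ⟨x, -, hx⟩ := SetLike.exists_of_lt (lt_top_of_finrank_lt_finrank (hT.trans_lt hr))
    exact ⟨T ⊔ span K {x}, hST.trans le_sup_left, by rw [finrank_sup_span_singleton hx, hT]⟩

theorem ceil_sub_mul_div {n : ℕ} (hn : 0 < n) (k m : ℕ) :
    ⌈(((n : ℚ) - k) * m) / n⌉ = (m : ℤ) - (k * m / n : ℕ) := by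
  have hquot : (((n : ℚ) - k) * m) / n = (m : ℤ) + -(((k * m : ℕ) : ℚ) / n) := by
    push_cast
    field_simp
    ring
  rw [hquot, Int.ceil_intCast_add, Int.ceil_neg, Rat.floor_natCast_div_natCast, Int.natCast_ediv,
    sub_eq_add_neg]

section RankWeight

variable {Fq Fqm} {n : ℕ}

theorem rankWeight_le_of_mem_span {r : ℕ} {B : Fin r → Fin n → Fq} {v : Fin n → Fqm}
    (hv : v ∈ span Fqm (Set.range fun i => algebraMap Fq Fqm ∘ B i)) :
    rankWeight Fq Fqm v ≤ r := by
  obtain ⟨a, rfl⟩ := (mem_span_range_iff_exists_fun Fqm).1 hv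
  have hspan : span Fq (Set.range (∑ i, a i • (algebraMap Fq Fqm ∘ B i)))
      ≤ span Fq (Set.range a) := by
    rw [span_le]
    rintro _ ⟨j, rfl⟩
    simp only [Finset.sum_apply, Pi.smul_apply, Function.comp_apply, smul_eq_mul, mul_comm (a _),
      ← Algebra.smul_def]
    exact sum_mem fun i _ => smul_mem _ _ (subset_span ⟨i, rfl⟩)
  have : FiniteDimensional Fq (span Fq (Set.range a)) :=
    FiniteDimensional.span_of_finite Fq (Set.finite_range a)
  calc rankWeight Fq Fqm (∑ i, a i • (algebraMap Fq Fqm ∘ B i))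
      ≤ finrank Fq (span Fq (Set.range a)) := finrank_mono hspan
    _ ≤ r := (finrank_range_le_card a).trans_eq (Fintype.card_fin r)

theorem exists_mem_span_of_rankWeight (v : Fin n → Fqm) :
    ∃ B : Fin (rankWeight Fq Fqm v) → Fin n → Fq,
      v ∈ span Fqm (Set.range fun i => algebraMap Fq Fqm ∘ B i) := by
  have : FiniteDimensional Fq (span Fq (Set.range v)) :=
    FiniteDimensional.span_of_finite Fq (Set.finite_range v)
  let b := finBasis Fq (span Fq (Set.range v))
  let entry (j : Fin n) : span Fq (Set.range v) := ⟨v j, subset_span ⟨j, rfl⟩⟩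
  refine ⟨fun i j => b.repr (entry j) i,
    (mem_span_range_iff_exists_fun Fqm).2 ⟨fun i => b i, funext fun j => ?_⟩⟩
  calc (∑ i, (b i : Fqm) • (algebraMap Fq Fqm ∘ fun j => b.repr (entry j) i)) j
      = ∑ i, b.repr (entry j) i • (b i : Fqm) := by
        simp only [Finset.sum_apply, Pi.smul_apply, Function.comp_apply, smul_eq_mul,
          mul_comm (b _ : Fqm), ← Algebra.smul_def]
    _ = (span Fq (Set.range v)).subtype (∑ i, b.repr (entry j) i • b i) := by
        simp only [map_sum, map_smul, subtype_apply]
    _ = v j := by rw [b.sum_repr]; rfl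

theorem algebraMap_comp_mem_span {r : ℕ} {B : Fin r → Fin n → Fq} {x : Fin n → Fq}
    (hx : x ∈ span Fq (Set.range B)) :
    algebraMap Fq Fqm ∘ x ∈ span Fqm (Set.range fun i => algebraMap Fq Fqm ∘ B i) := by
  obtain ⟨c, rfl⟩ := (mem_span_range_iff_exists_fun Fq).1 hx
  refine (mem_span_range_iff_exists_fun Fqm).2 ⟨algebraMap Fq Fqm ∘ c, funext fun j => ?_⟩
  simp only [Finset.sum_apply, Pi.smul_apply, Function.comp_apply, smul_eq_mul, map_sum, map_mul]

theorem exists_linearIndependent_mem_span_of_rankWeight_le {r : ℕ} {v : Fin n → Fqm}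
    (hv : rankWeight Fq Fqm v ≤ r) (hr : r ≤ n) :
    ∃ B : Fin r → Fin n → Fq, LinearIndependent Fq B ∧
      v ∈ span Fqm (Set.range fun i => algebraMap Fq Fqm ∘ B i) := by
  obtain ⟨A, hA⟩ := exists_mem_span_of_rankWeight (Fq := Fq) v
  have hrank : finrank Fq (span Fq (Set.range A)) ≤ r :=
    (finrank_range_le_card A).trans ((Fintype.card_fin _).trans_le hv)
  obtain ⟨T, hAT, hT⟩ := exists_ge_finrank_eq hrank (by rwa [finrank_fin_fun])
  let b := finBasisOfFinrankEq Fq T hT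
  have hspan : span Fq (Set.range (T.subtype ∘ b)) = T := by
    rw [Set.range_comp, span_image, b.span_eq, Submodule.map_top, range_subtype]
  refine ⟨T.subtype ∘ b, b.linearIndependent.map' T.subtype T.ker_subtype, span_le.2 ?_ hA⟩
  rintro _ ⟨i, rfl⟩
  exact algebraMap_comp_mem_span (hspan.symm ▸ hAT (subset_span ⟨i, rfl⟩))

theorem le_minRankDist_iff {D : Submodule Fqm (Fin n → Fqm)} (hD : D ≠ ⊥) {d : ℕ} :
    d ≤ minRankDist Fq Fqm D ↔ ∀ v ∈ D, v ≠ 0 → d ≤ rankWeight Fq Fqm v := by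
  obtain ⟨w, hwD, hw⟩ := D.exists_mem_ne_zero_of_ne_bot hD
  refine ⟨fun hd v hvD hv => hd.trans (Nat.sInf_le ⟨v, hvD, hv, rfl⟩), fun hd => ?_⟩
  refine le_csInf ⟨rankWeight Fq Fqm w, w, hwD, hw, rfl⟩ ?_
  rintro _ ⟨v, hvD, hv, rfl⟩
  exact hd v hvD hv

/- If `T ⊆ Fqm` has dimension `t`, the words of `D` with all entries in `T` are the kernel of
`D → (Fqm / T)^n`, which is not injective for dimension reasons. When `t` exceeds the degree of the
extension, the truncated subtraction makes `hD` say that `D ≠ 0`. -/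
theorem exists_rankWeight_le_of_lt [FiniteDimensional Fq Fqm] {D : Submodule Fqm (Fin n → Fqm)}
    {t : ℕ} (hD : n * (finrank Fq Fqm - t) < finrank Fq Fqm * finrank Fqm D) :
    ∃ v ∈ D, v ≠ 0 ∧ rankWeight Fq Fqm v ≤ t := by
  obtain ⟨T, -, hT⟩ : ∃ T : Submodule Fq Fqm, ⊥ ≤ T ∧ finrank Fq T = min t (finrank Fq Fqm) :=
    exists_ge_finrank_eq (by simp) (min_le_right _ _)
  let reduce : D.restrictScalars Fq →ₗ[Fq] (Fin n → Fqm ⧸ T) :=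
    T.mkQ.compLeft (Fin n) ∘ₗ (D.restrictScalars Fq).subtype
  have hdom : finrank Fq (D.restrictScalars Fq) = finrank Fq Fqm * finrank Fqm D :=
    (finrank_mul_finrank Fq Fqm D).symm
  have hcod : finrank Fq (Fin n → Fqm ⧸ T) = n * (finrank Fq Fqm - t) := by
    have hquot := T.finrank_quotient_add_finrank
    rw [finrank_pi_fintype, Finset.sum_const, Finset.card_univ, Fintype.card_fin, smul_eq_mul]
    congr 1
    omega
  have hker : LinearMap.ker reduce ≠ ⊥ :=
    LinearMap.ker_ne_bot_of_finrank_lt (by rwa [hdom, hcod])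
  obtain ⟨v, hv, hv0⟩ := exists_mem_ne_zero_of_ne_bot hker
  have hvT : span Fq (Set.range (v : Fin n → Fqm)) ≤ T := by
    rw [span_le]
    rintro _ ⟨j, rfl⟩
    exact (Submodule.Quotient.mk_eq_zero T).1 (congrFun (LinearMap.mem_ker.1 hv) j)
  exact ⟨v, v.2, fun h => hv0 (Subtype.ext h),
    (finrank_mono hvT).trans (hT.trans_le (min_le_left _ _))⟩

end RankWeight

section Scattered

variable {Fq Fqm} {k h : ℕ}

theorem isEvasive_self_iff_linearIndependent {U : Submodule Fq (Fin k → Fqm)}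
    [FiniteDimensional Fq U] (hhk : h ≤ k) :
    IsEvasive Fq Fqm U h h ↔ ∀ u : Fin (h + 1) → Fin k → Fqm, (∀ i, u i ∈ U) →
      LinearIndependent Fq u → LinearIndependent Fqm u := by
  refine ⟨fun hU u huU hu => ?_, fun hU W hW => ?_⟩
  · by_contra hdep
    have hspan : finrank Fqm (span Fqm (Set.range u)) ≤ h := by
      rw [linearIndependent_iff_card_le_finrank_span, Fintype.card_fin, Set.finrank] at hdep
      omega
    obtain ⟨W, huW, hW⟩ := exists_ge_finrank_eq hspan (by rwa [finrank_fin_fun])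
    have hle : span Fq (Set.range u) ≤ U ⊓ W.restrictScalars Fq := by
      rw [span_le]
      rintro _ ⟨i, rfl⟩
      exact ⟨huU i, huW (subset_span ⟨i, rfl⟩)⟩
    have : FiniteDimensional Fq ↥(U ⊓ W.restrictScalars Fq) := finiteDimensional_inf_left _ _
    have hcard := (finrank_mono hle).trans (hU W hW)
    rw [finrank_span_eq_card hu, Fintype.card_fin] at hcard
    omega
  · by_contra! hlt
    obtain ⟨u, hu⟩ := exists_linearIndependent_of_le_finrank (Nat.succ_le_of_lt hlt)
    have huL := hU (fun i => u i) (fun i => (u i).2.1)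
      (hu.map' (Submodule.subtype _) (Submodule.ker_subtype _))
    have hspan : span Fqm (Set.range fun i => (u i : Fin k → Fqm)) ≤ W := by
      rw [span_le]
      rintro _ ⟨i, rfl⟩
      exact (u i).2.2
    have hcard := finrank_mono hspan
    rw [finrank_span_eq_card huL, Fintype.card_fin, hW] at hcard
    omega

end Scattered

section Relations

variable {Fq Fqm} {n r : ℕ} {V : Type*} [AddCommGroup V] [Module Fq V] [Module Fqm V]
  [IsScalarTower Fq Fqm V]

theorem linearCombination_algebraMap_comp (g : Fin n → V) (x : Fin n → Fq) :
    Fintype.linearCombination Fqm g (algebraMap Fq Fqm ∘ x) = Fintype.linearCombination Fq g x := by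
  simp [Fintype.linearCombination_apply]

theorem linearIndependent_of_lt_rankWeight {g : Fin n → V}
    (hg : ∀ v ∈ LinearMap.ker (Fintype.linearCombination Fqm g), v ≠ 0 → r < rankWeight Fq Fqm v)
    {u : Fin r → V} (huU : ∀ i, u i ∈ span Fq (Set.range g)) (hu : LinearIndependent Fq u) :
    LinearIndependent Fqm u := by
  simp only [← Fintype.range_linearCombination, LinearMap.mem_range] at huU
  choose B hB using huU
  obtain rfl : Fintype.linearCombination Fq g ∘ B = u := funext hB
  have hBL : LinearIndependent Fqm fun i => algebraMap Fq Fqm ∘ B i :=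
    linearIndependent_algebraMap_comp_iff.2 (hu.of_comp _)
  rw [Fintype.linearIndependent_iff] at hBL ⊢
  intro a ha
  refine hBL a (by_contra fun hne => ?_)
  have hrel : ∑ i, a i • (algebraMap Fq Fqm ∘ B i) ∈
      LinearMap.ker (Fintype.linearCombination Fqm g) := by
    simpa only [LinearMap.mem_ker, map_sum, map_smul, linearCombination_algebraMap_comp,
      Function.comp_apply] using ha
  exact (hg _ hrel hne).not_ge
    (rankWeight_le_of_mem_span ((mem_span_range_iff_exists_fun Fqm).2 ⟨a, rfl⟩))

theorem lt_rankWeight_of_linearIndependent {g : Fin n → V} (hg : LinearIndependent Fq g)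
    (hr : r ≤ n) (hU : ∀ u : Fin r → V, (∀ i, u i ∈ span Fq (Set.range g)) →
      LinearIndependent Fq u → LinearIndependent Fqm u)
    {v : Fin n → Fqm} (hv : v ∈ LinearMap.ker (Fintype.linearCombination Fqm g)) (hv0 : v ≠ 0) :
    r < rankWeight Fq Fqm v := by
  by_contra! hle
  obtain ⟨B, hB, hvB⟩ := exists_linearIndependent_mem_span_of_rankWeight_le hle hr
  obtain ⟨a, rfl⟩ := (mem_span_range_iff_exists_fun Fqm).1 hvB
  have huL : LinearIndependent Fqm (Fintype.linearCombination Fq g ∘ B) := by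
    refine hU _ (fun i => ?_)
      (hB.map' _ (LinearMap.ker_eq_bot.2 hg.fintypeLinearCombination_injective))
    rw [← Fintype.range_linearCombination]
    exact LinearMap.mem_range_self _ _
  have ha : ∀ i, a i = 0 := by
    refine Fintype.linearIndependent_iff.1 huL a ?_
    simpa only [LinearMap.mem_ker, map_sum, map_smul, linearCombination_algebraMap_comp,
      Function.comp_apply] using hv
  exact hv0 (by simp [ha])

end Relations

section DualCode

variable {Fq Fqm} {n k h : ℕ} {C : Submodule Fqm (Fin n → Fqm)}

theorem dualCode_eq_ker_linearCombination {G : Fin k → Fin n → Fqm} (hG : IsGenMatrix Fqm C G) :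
    dualCode Fqm C = LinearMap.ker (Fintype.linearCombination Fqm fun j i => G i j) := by
  subst hG
  ext v
  have hrows : v ∈ LinearMap.ker (Fintype.linearCombination Fqm fun j i => G i j) ↔
      ∀ i, ∑ j, G i j * v j = 0 := by
    simp [Fintype.linearCombination_apply, funext_iff, mul_comm]
  rw [hrows]
  refine ⟨fun hv i => hv _ (subset_span ⟨i, rfl⟩), fun hv c hc => ?_⟩
  induction hc using span_induction with
  | mem x hx => obtain ⟨i, rfl⟩ := hx; exact hv i
  | zero => simp
  | add x y _ _ hx hy => simp [add_mul, Finset.sum_add_distrib, hx, hy]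
  | smul a x _ hx => simp [mul_assoc, ← Finset.mul_sum, hx]

theorem le_finrank_dualCode_add {G : Fin k → Fin n → Fqm} (hG : IsGenMatrix Fqm C G) :
    n ≤ finrank Fqm (dualCode Fqm C) + k := by
  rw [dualCode_eq_ker_linearCombination hG]
  set columns := Fintype.linearCombination Fqm fun j i => G i j
  have hrange := (LinearMap.range columns).finrank_le
  have hnullity := columns.finrank_range_add_finrank_ker
  simp only [finrank_fin_fun] at hrange hnullity
  omega

theorem exists_mem_dualCode_rankWeight_le [FiniteDimensional Fq Fqm] {G : Fin k → Fin n → Fqm}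
    (hG : IsGenMatrix Fqm C G) (hkn : k < n) :
    ∃ v ∈ dualCode Fqm C, v ≠ 0 ∧ rankWeight Fq Fqm v ≤ k * finrank Fq Fqm / n + 1 := by
  refine exists_rankWeight_le_of_lt ?_
  set m := finrank Fq Fqm
  have hm : 0 < m := finrank_pos
  have hdiv : k * m < n * (k * m / n + 1) := Nat.lt_mul_div_succ _ (by omega)
  have hkm : k * m < n * m := Nat.mul_lt_mul_of_pos_right hkn hm
  calc n * (m - (k * m / n + 1)) < n * m - k * m := by rw [Nat.mul_sub]; omega
    _ = m * (n - k) := by rw [← Nat.sub_mul, mul_comm]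
    _ ≤ m * finrank Fqm (dualCode Fqm C) := by
      gcongr
      have := le_finrank_dualCode_add hG
      omega

theorem isEvasive_self_iff_lt_rankWeight_dualCode {G : Fin k → Fin n → Fqm}
    (hG : IsGenMatrix Fqm C G) (hcol : LinearIndependent Fq fun j i => G i j)
    (hhk : h ≤ k) (hhn : h < n) :
    IsEvasive Fq Fqm (span Fq (Set.range fun j i => G i j)) h h ↔
      ∀ v ∈ dualCode Fqm C, v ≠ 0 → h + 1 < rankWeight Fq Fqm v := by
  have : FiniteDimensional Fq (span Fq (Set.range fun j i => G i j)) :=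
    FiniteDimensional.span_of_finite Fq (Set.finite_range _)
  rw [isEvasive_self_iff_linearIndependent hhk, dualCode_eq_ker_linearCombination hG]
  exact ⟨fun hU v hv hv0 => lt_rankWeight_of_linearIndependent hcol hhn hU hv hv0,
    fun hw u huU hu => linearIndependent_of_lt_rankWeight hw huU hu⟩

theorem stmt19_general {m : ℕ} (hm : finrank Fq Fqm = m) (hhk : h ≤ k) (hkn : k < n)
    (hdiv : k * m / n = h + 1) {U : Submodule Fq (Fin k → Fqm)} (hsys : IsSystem Fq Fqm n U)
    (hU : IsAssociatedSystem Fq Fqm C U) :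
    IsEvasive Fq Fqm U h h ↔
      (m : ℤ) - ⌈(((n : ℚ) - k) * m) / n⌉ - (minRankDist Fq Fqm (dualCode Fqm C) : ℤ) + 1
        = 0 := by
  obtain ⟨G, hG, rfl⟩ := hU
  have : FiniteDimensional Fq Fqm :=
    FiniteDimensional.of_finrank_pos (hm ▸ Nat.pos_of_ne_zero (by rintro rfl; simp at hdiv))
  have hcol : LinearIndependent Fq fun j i => G i j := by
    rw [linearIndependent_iff_card_eq_finrank_span, Fintype.card_fin, Set.finrank, hsys.1]
  obtain ⟨v, hvD, hv0, hvw⟩ := exists_mem_dualCode_rankWeight_le (Fq := Fq) hG hkn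
  have hD : dualCode Fqm C ≠ ⊥ := (Submodule.ne_bot_iff _).2 ⟨v, hvD, hv0⟩
  have hsingleton : minRankDist Fq Fqm (dualCode Fqm C) ≤ h + 2 :=
    ((le_minRankDist_iff hD).1 le_rfl v hvD hv0).trans (by rwa [hm, hdiv] at hvw)
  calc IsEvasive Fq Fqm (span Fq (Set.range fun j i => G i j)) h h
      ↔ h + 2 ≤ minRankDist Fq Fqm (dualCode Fqm C) := by
        rw [isEvasive_self_iff_lt_rankWeight_dualCode hG hcol hhk (by omega), le_minRankDist_iff hD]
        rfl
    _ ↔ _ := by rw [ceil_sub_mul_div (by omega), hdiv]; omega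

end DualCode

/-- with `n = ⌊km/(h+1)⌋` and `km - (h+2)⌊km/(h+1)⌋ < 0`, `U` is (quasi-maximum)
`h`-scattered iff `C^⊥` is quasi-MRD, i.e. its Singleton rank defect is `0`. -/
theorem stmt19 [Fintype Fq] (n k m h : ℕ) (hm : finrank Fq Fqm = m)
    (hhk : h < k) (hkn : k < n) (hn : n = k * m / (h + 1))
    (hcond : (k * m : ℤ) - ((h : ℤ) + 2) * ((k * m / (h + 1) : ℕ) : ℤ) < 0)
    (C : Submodule Fqm (Fin n → Fqm)) (hdim : finrank Fqm ↥C = k)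
    (hnd : IsNondegenerate Fq Fqm k C)
    (U : Submodule Fq (Fin k → Fqm)) (hsys : IsSystem Fq Fqm n U)
    (hU : IsAssociatedSystem Fq Fqm C U) :
    IsEvasive Fq Fqm U h h ↔
      (m : ℤ) - ⌈(((n : ℚ) - k) * m) / n⌉ - (minRankDist Fq Fqm (dualCode Fqm C) : ℤ) + 1
        = 0 := by
  refine stmt19_general hm hhk.le hkn (Nat.div_eq_of_lt_le ?_ ?_) hsys hU
  · rw [hn]; exact Nat.mul_div_le _ _
  · rw [← hn] at hcond; zify; linarith
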